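/- Let ψ be a regular N-function such that both ψ and its conjugate ψ* satisfy the Δ₂-condition. Then there exist constants c, C > 0, depending only on Δ₂(ψ) and Δ₂(ψ*), such that for every d, n ≥ 1 and all P, Q ∈ ℝ^{d×n}: c·ψ_{|P|}(|P−Q|) ≤ ψ_{|Q|}(|P−Q|) ≤ C·ψ_{|P|}(|P−Q|), where |·| is the Frobenius norm on ℝ^{d×n}. -/

import Mathlib

/-!
The triangle inequality gives `|a - b| ≤ t` for `a = |P|`, `b = |Q|`, `t = |P - Q|`, and nothing
else about the matrices matters. Since `ψ_a'` is nonnegative and increasing, `ψ_a(t)` lies between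
`(t/2) ψ_a'(t/2)` and `t ψ_a'(t)`, so it suffices to bound `ψ_b'(t)` by a multiple of `ψ_a'(t/2)`.
As `b + t ≤ 4 (a + t/2)` and `a + t/2 ≤ 2 (b + t)`, such a bound follows from `ψ'(4x) ≲ ψ'(x)`,
which is the Δ₂-condition transferred to `ψ'` by the convexity bounds `ψ(x) ≤ x ψ'(x) ≤ ψ(2x)`.
-/

open Real Filter Set Topology

noncomputable section

/-- An N-function: convex on `[0,∞)`, vanishing at `0`, positive on `(0,∞)`,
with `ψ t / t → 0` as `t → 0⁺` and `ψ t / t → ∞` as `t → ∞`. -/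
def IsNFunction (ψ : ℝ → ℝ) : Prop :=
  ConvexOn ℝ (Set.Ici 0) ψ ∧ ψ 0 = 0 ∧ (∀ t > 0, 0 < ψ t) ∧
    Filter.Tendsto (fun t => ψ t / t) (nhdsWithin 0 (Set.Ioi 0)) (nhds 0) ∧
    Filter.Tendsto (fun t => ψ t / t) Filter.atTop Filter.atTop

/-- A regular N-function: an N-function which is `C¹` on `[0,∞)`, `C²` on `(0,∞)`,
with `ψ'' t > 0` for all `t > 0`. -/
def IsRegularNFunction (ψ : ℝ → ℝ) : Prop :=
  IsNFunction ψ ∧ ContDiffOn ℝ 1 ψ (Set.Ici 0) ∧ ContDiffOn ℝ 2 ψ (Set.Ioi 0) ∧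
    ∀ t > 0, 0 < deriv (deriv ψ) t

/-- A balanced N-function with characteristics `(γ₁, γ₂)`. -/
def IsBalancedNFunction (ψ : ℝ → ℝ) (γ₁ γ₂ : ℝ) : Prop :=
  IsRegularNFunction ψ ∧ 0 < γ₁ ∧ γ₁ ≤ 1 ∧ 1 ≤ γ₂ ∧
    ∀ t > 0, γ₁ * deriv ψ t ≤ t * deriv (deriv ψ) t ∧
      t * deriv (deriv ψ) t ≤ γ₂ * deriv ψ t

/-- The conjugate N-function `ψ*(t) = sup_{s ≥ 0} (s·t − ψ(s))`. -/
def conjNF (ψ : ℝ → ℝ) (t : ℝ) : ℝ :=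
  ⨆ s : Set.Ici (0:ℝ), ((s : ℝ) * t - ψ s)

/-- `ψ` satisfies the Δ₂-condition with constant `K`. -/
def SatisfiesDelta2 (ψ : ℝ → ℝ) (K : ℝ) : Prop :=
  2 < K ∧ ∀ t ≥ (0:ℝ), ψ (2 * t) ≤ K * ψ t

/-- The derivative `ψ'_a(t) = ψ'(a+t)·t/(a+t)` of the shifted N-function. -/
def shiftDF (ψ : ℝ → ℝ) (a t : ℝ) : ℝ := deriv ψ (a + t) * t / (a + t)

/-- The shifted N-function `ψ_a(t) = ∫₀ᵗ ψ'(a+s)·s/(a+s) ds`. -/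
def shiftNF (ψ : ℝ → ℝ) (a t : ℝ) : ℝ := ∫ s in (0:ℝ)..t, shiftDF ψ a s

/-- Frobenius norm of a `d×n` real matrix. -/
def frobNorm {d n : ℕ} (P : Fin d → Fin n → ℝ) : ℝ :=
  Real.sqrt (∑ i : Fin d, ∑ j : Fin n, (P i j) ^ 2)

/-- Frobenius inner product `P : Q` of two `d×n` real matrices. -/
def frobInner {d n : ℕ} (P Q : Fin d → Fin n → ℝ) : ℝ :=
  ∑ i : Fin d, ∑ j : Fin n, P i j * Q i j

/-- `F(P) = √(φ'(|P|)/|P|)·P` (equal to `0` at `P = 0`). -/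
def FmapNF (φ : ℝ → ℝ) {d n : ℕ} (P : Fin d → Fin n → ℝ) : Fin d → Fin n → ℝ :=
  Real.sqrt (deriv φ (frobNorm P) / frobNorm P) • P

/-- `F*(P) = √((φ*)'(|P|)/|P|)·P` (equal to `0` at `P = 0`). -/
def FstarNF (φ : ℝ → ℝ) {d n : ℕ} (P : Fin d → Fin n → ℝ) : Fin d → Fin n → ℝ :=
  Real.sqrt (deriv (conjNF φ) (frobNorm P) / frobNorm P) • P

/-- The standard basis matrix with a `1` in entry `(k,l)`. -/
def basisMat {d n : ℕ} (k : Fin d) (l : Fin n) : Fin d → Fin n → ℝ :=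
  fun i j => if i = k ∧ j = l then 1 else 0

/-- `𝒜` has `φ`-structure with constants `(γ₃, γ₄)`. -/
def HasPhiStructure {d n : ℕ} (A : (Fin d → Fin n → ℝ) → (Fin d → Fin n → ℝ))
    (φ : ℝ → ℝ) (γ₃ γ₄ : ℝ) : Prop :=
  0 < γ₃ ∧ γ₃ ≤ 1 ∧ 1 < γ₄ ∧ Continuous A ∧
    ContDiffOn ℝ 1 A {P | P ≠ 0} ∧ A 0 = 0 ∧
    (∀ P : Fin d → Fin n → ℝ, P ≠ 0 → ∀ Q : Fin d → Fin n → ℝ,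
      γ₃ * (deriv φ (frobNorm P) / frobNorm P) * (frobNorm Q) ^ 2 ≤
        ∑ i : Fin d, ∑ j : Fin n, ∑ k : Fin d, ∑ l : Fin n,
          fderiv ℝ A P (basisMat k l) i j * Q i j * Q k l) ∧
    (∀ P : Fin d → Fin n → ℝ, P ≠ 0 → ∀ (i k : Fin d) (j l : Fin n),
      |fderiv ℝ A P (basisMat k l) i j| ≤ γ₄ * (deriv φ (frobNorm P) / frobNorm P))

section Convex

variable {ψ : ℝ → ℝ} {x : ℝ}

theorem le_mul_deriv_of_convexOn (hconv : ConvexOn ℝ (Ici 0) ψ) (hzero : ψ 0 = 0) (hx : 0 < x)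
    (hdiff : DifferentiableAt ℝ ψ x) : ψ x ≤ x * deriv ψ x := by
  have hslope := hconv.slope_le_deriv self_mem_Ici hx.le hx hdiff
  rwa [slope_def_field, hzero, sub_zero, sub_zero, div_le_iff₀' hx] at hslope

theorem mul_deriv_le_apply_two_mul_sub (hconv : ConvexOn ℝ (Ici 0) ψ) (hx : 0 < x)
    (hdiff : DifferentiableAt ℝ ψ x) : x * deriv ψ x ≤ ψ (2 * x) - ψ x := by
  have h2x : x < 2 * x := by linarith
  have hslope := hconv.deriv_le_slope hx.le (hx.trans h2x).le h2x hdiff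
  rwa [slope_def_field, le_div_iff₀' (sub_pos.2 h2x), two_mul, add_sub_cancel_right, ← two_mul]
    at hslope

end Convex

namespace SatisfiesDelta2

variable {ψ : ℝ → ℝ} {K x : ℝ}

theorem constant_pos (hΔ : SatisfiesDelta2 ψ K) : 0 < K :=
  two_pos.trans hΔ.1

theorem apply_nonneg (hΔ : SatisfiesDelta2 ψ K) (hconv : ConvexOn ℝ (Ici 0) ψ) (hzero : ψ 0 = 0)
    (hx : 0 < x) (hdiff : DifferentiableAt ℝ ψ x) : 0 ≤ ψ x := by
  have hconvex : ψ x ≤ ψ (2 * x) - ψ x :=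
    (le_mul_deriv_of_convexOn hconv hzero hx hdiff).trans
      (mul_deriv_le_apply_two_mul_sub hconv hx hdiff)
  have hgrowth : ψ (2 * x) ≤ K * ψ x := hΔ.2 x hx.le
  exact nonneg_of_mul_nonneg_right (a := K - 2) (by linarith) (sub_pos.2 hΔ.1)

theorem deriv_nonneg (hΔ : SatisfiesDelta2 ψ K) (hconv : ConvexOn ℝ (Ici 0) ψ)
    (hzero : ψ 0 = 0) (hx : 0 < x) (hdiff : DifferentiableAt ℝ ψ x) : 0 ≤ deriv ψ x :=
  nonneg_of_mul_nonneg_right ((hΔ.apply_nonneg hconv hzero hx hdiff).trans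
    (le_mul_deriv_of_convexOn hconv hzero hx hdiff)) hx

theorem apply_two_pow_mul_le (hΔ : SatisfiesDelta2 ψ K) (hx : 0 ≤ x) (m : ℕ) :
    ψ (2 ^ m * x) ≤ K ^ m * ψ x := by
  induction m with
  | zero => simp
  | succ m ih =>
    calc ψ (2 ^ (m + 1) * x) = ψ (2 * (2 ^ m * x)) := by rw [pow_succ', mul_assoc]
      _ ≤ K * ψ (2 ^ m * x) := hΔ.2 _ (by positivity)
      _ ≤ K * (K ^ m * ψ x) := mul_le_mul_of_nonneg_left ih hΔ.constant_pos.le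
      _ = K ^ (m + 1) * ψ x := by rw [pow_succ', mul_assoc]

theorem two_pow_mul_deriv_le (hΔ : SatisfiesDelta2 ψ K) (hconv : ConvexOn ℝ (Ici 0) ψ)
    (hzero : ψ 0 = 0) (hdiff : ∀ t > 0, DifferentiableAt ℝ ψ t) (hx : 0 < x) (m : ℕ) :
    2 ^ m * deriv ψ (2 ^ m * x) ≤ K ^ (m + 1) * deriv ψ x := by
  have hmx : 0 < 2 ^ m * x := by positivity
  have hK : 0 ≤ K ^ (m + 1) := pow_nonneg hΔ.constant_pos.le _
  refine le_of_mul_le_mul_left ?_ hx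
  calc x * (2 ^ m * deriv ψ (2 ^ m * x)) = 2 ^ m * x * deriv ψ (2 ^ m * x) := by ring
    _ ≤ ψ (2 * (2 ^ m * x)) - ψ (2 ^ m * x) :=
      mul_deriv_le_apply_two_mul_sub hconv hmx (hdiff _ hmx)
    _ ≤ ψ (2 * (2 ^ m * x)) := sub_le_self _ (hΔ.apply_nonneg hconv hzero hmx (hdiff _ hmx))
    _ = ψ (2 ^ (m + 1) * x) := by rw [pow_succ', mul_assoc]
    _ ≤ K ^ (m + 1) * ψ x := hΔ.apply_two_pow_mul_le hx.le _
    _ ≤ K ^ (m + 1) * (x * deriv ψ x) :=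
      mul_le_mul_of_nonneg_left (le_mul_deriv_of_convexOn hconv hzero hx (hdiff x hx)) hK
    _ = x * (K ^ (m + 1) * deriv ψ x) := by ring

end SatisfiesDelta2

section MonotoneIntegral

variable {f : ℝ → ℝ} {a b c : ℝ}

theorem integral_le_sub_mul_of_monotoneOn (hab : a ≤ b) (hf : MonotoneOn f (Icc a b)) :
    ∫ s in a..b, f s ≤ (b - a) * f b := by
  have hint : IntervalIntegrable f MeasureTheory.volume a b :=
    MonotoneOn.intervalIntegrable (by rwa [uIcc_of_le hab])
  calc ∫ s in a..b, f s ≤ ∫ _ in a..b, f b :=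
        intervalIntegral.integral_mono_on hab hint intervalIntegrable_const
          fun s hs => hf hs (right_mem_Icc.2 hab) hs.2
    _ = (b - a) * f b := by rw [intervalIntegral.integral_const, smul_eq_mul]

theorem sub_mul_le_integral_of_monotoneOn (hc : c ∈ Icc a b) (hf : MonotoneOn f (Icc a b))
    (hfa : 0 ≤ f a) : (b - c) * f c ≤ ∫ s in a..b, f s := by
  have hab : a ≤ b := hc.1.trans hc.2
  have hint : IntervalIntegrable f MeasureTheory.volume a b :=
    MonotoneOn.intervalIntegrable (by rwa [uIcc_of_le hab])
  have hnonneg : ∀ s ∈ Ioc a b, 0 ≤ f s := fun s hs =>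
    hfa.trans (hf (left_mem_Icc.2 hab) (Ioc_subset_Icc_self hs) hs.1.le)
  calc (b - c) * f c = ∫ _ in c..b, f c := by rw [intervalIntegral.integral_const, smul_eq_mul]
    _ ≤ ∫ s in c..b, f s :=
        intervalIntegral.integral_mono_on hc.2 intervalIntegrable_const
          (hint.mono_set (uIcc_subset_uIcc_right (Icc_subset_uIcc hc)))
          fun s hs => hf hc ⟨hc.1.trans hs.1, hs.2⟩ hs.1
    _ ≤ ∫ s in a..b, f s :=
        intervalIntegral.integral_mono_interval hc.1 hc.2 le_rfl
          ((MeasureTheory.ae_restrict_iff' measurableSet_Ioc).2 (.of_forall hnonneg)) hint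

end MonotoneIntegral

section Shift

variable {ψ : ℝ → ℝ} {K L a b t : ℝ}

theorem shiftDF_zero_right (ψ : ℝ → ℝ) (a : ℝ) : shiftDF ψ a 0 = 0 := by
  simp [shiftDF]

theorem monotoneOn_shiftDF (hmono : MonotoneOn (deriv ψ) (Ioi 0))
    (hnonneg : ∀ x > 0, 0 ≤ deriv ψ x) (ha : 0 ≤ a) : MonotoneOn (shiftDF ψ a) (Ici 0) := by
  intro x (hx : 0 ≤ x) y (hy : 0 ≤ y) hxy
  rcases hx.eq_or_lt with rfl | hx
  · rw [shiftDF_zero_right]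
    rcases hy.eq_or_lt with rfl | hy
    · rw [shiftDF_zero_right]
    · have := hnonneg (a + y) (by positivity)
      unfold shiftDF
      positivity
  · replace hy : 0 < y := hx.trans_le hxy
    have hax : 0 < a + x := by positivity
    have hay : 0 < a + y := by positivity
    have hderiv : deriv ψ (a + x) ≤ deriv ψ (a + y) := hmono hax hay (by gcongr)
    have hfrac : x / (a + x) ≤ y / (a + y) := by
      rw [div_le_div_iff₀ hax hay]
      linarith [mul_le_mul_of_nonneg_left hxy ha, mul_comm x y]
    simp only [shiftDF, mul_div_assoc]
    exact mul_le_mul hderiv hfrac (by positivity) (hnonneg _ hay)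

theorem shiftNF_le_mul_shiftDF (hmono : MonotoneOn (shiftDF ψ a) (Ici 0)) (ht : 0 ≤ t) :
    shiftNF ψ a t ≤ t * shiftDF ψ a t := by
  simpa only [shiftNF, sub_zero] using
    integral_le_sub_mul_of_monotoneOn ht (hmono.mono Icc_subset_Ici_self)

theorem half_mul_shiftDF_half_le_shiftNF (hmono : MonotoneOn (shiftDF ψ a) (Ici 0)) (ht : 0 ≤ t) :
    t / 2 * shiftDF ψ a (t / 2) ≤ shiftNF ψ a t := by
  simpa only [shiftNF, sub_half] using
    sub_mul_le_integral_of_monotoneOn ⟨div_nonneg ht zero_le_two, half_le_self ht⟩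
      (hmono.mono Icc_subset_Ici_self) (shiftDF_zero_right ψ a).ge

theorem shiftDF_le_mul_shiftDF_half (hmono : MonotoneOn (deriv ψ) (Ioi 0))
    (hnonneg : ∀ x > 0, 0 ≤ deriv ψ x) (hL : ∀ x > 0, deriv ψ (4 * x) ≤ L * deriv ψ x)
    (ha : 0 ≤ a) (hb : 0 ≤ b) (ht : 0 < t) (hab : |a - b| ≤ t) :
    shiftDF ψ b t ≤ 4 * L * shiftDF ψ a (t / 2) := by
  obtain ⟨hba, hab⟩ := abs_le.1 hab
  have hat : 0 < a + t / 2 := by positivity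
  have hbt : 0 < b + t := by positivity
  have hderiv : deriv ψ (b + t) ≤ L * deriv ψ (a + t / 2) :=
    (hmono hbt (mul_pos four_pos hat) (by linarith)).trans (hL _ hat)
  have hfrac : t / (b + t) ≤ 4 * (t / 2 / (a + t / 2)) := by
    have hden : a + t / 2 ≤ 2 * (b + t) := by linarith
    rw [← mul_div_assoc, div_le_div_iff₀ hbt hat]
    linarith [mul_le_mul_of_nonneg_left hden ht.le]
  calc shiftDF ψ b t = deriv ψ (b + t) * (t / (b + t)) := mul_div_assoc ..
    _ ≤ L * deriv ψ (a + t / 2) * (4 * (t / 2 / (a + t / 2))) :=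
      mul_le_mul hderiv hfrac (by positivity) ((hnonneg _ hbt).trans hderiv)
    _ = 4 * L * shiftDF ψ a (t / 2) := by unfold shiftDF; ring

theorem shiftNF_le_mul_shiftNF (hconv : ConvexOn ℝ (Ici 0) ψ) (hzero : ψ 0 = 0)
    (hdiff : ∀ x > 0, DifferentiableAt ℝ ψ x) (hΔ : SatisfiesDelta2 ψ K) (ha : 0 ≤ a) (hb : 0 ≤ b)
    (hab : |a - b| ≤ t) : shiftNF ψ b t ≤ 2 * K ^ 3 * shiftNF ψ a t := by
  have hmono : MonotoneOn (deriv ψ) (Ioi 0) :=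
    (hconv.subset Ioi_subset_Ici_self (convex_Ioi 0)).monotoneOn_deriv hdiff
  have hderiv : ∀ x > 0, 0 ≤ deriv ψ x := fun x hx =>
    hΔ.deriv_nonneg hconv hzero hx (hdiff x hx)
  have hquadruple : ∀ x > 0, deriv ψ (4 * x) ≤ K ^ 3 / 4 * deriv ψ x := fun x hx => by
    have h : 4 * deriv ψ (4 * x) ≤ K ^ 3 * deriv ψ x := by
      convert hΔ.two_pow_mul_deriv_le hconv hzero hdiff hx 2 using 3 <;> norm_num
    linarith
  have hK := hΔ.constant_pos
  rcases (abs_nonneg _).trans hab |>.eq_or_lt with rfl | ht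
  · simp [shiftNF]
  calc shiftNF ψ b t ≤ t * shiftDF ψ b t :=
        shiftNF_le_mul_shiftDF (monotoneOn_shiftDF hmono hderiv hb) ht.le
    _ ≤ t * (4 * (K ^ 3 / 4) * shiftDF ψ a (t / 2)) := by
        gcongr
        exact shiftDF_le_mul_shiftDF_half hmono hderiv hquadruple ha hb ht hab
    _ = 2 * K ^ 3 * (t / 2 * shiftDF ψ a (t / 2)) := by ring
    _ ≤ 2 * K ^ 3 * shiftNF ψ a t := by
        gcongr
        exact half_mul_shiftDF_half_le_shiftNF (monotoneOn_shiftDF hmono hderiv ha) ht.le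

end Shift

theorem shift_equiv_general (K : ℝ) :
    ∃ c > (0 : ℝ), ∃ C > (0 : ℝ), ∀ ψ : ℝ → ℝ, ConvexOn ℝ (Ici 0) ψ → ψ 0 = 0 →
      (∀ t > 0, DifferentiableAt ℝ ψ t) → SatisfiesDelta2 ψ K →
      ∀ (E : Type*) [SeminormedAddCommGroup E] (x y : E),
        c * shiftNF ψ ‖x‖ ‖x - y‖ ≤ shiftNF ψ ‖y‖ ‖x - y‖ ∧
          shiftNF ψ ‖y‖ ‖x - y‖ ≤ C * shiftNF ψ ‖x‖ ‖x - y‖ := by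
  by_cases hK : 2 < K
  · have hC : 0 < 2 * K ^ 3 := by positivity
    refine ⟨(2 * K ^ 3)⁻¹, inv_pos.2 hC, 2 * K ^ 3, hC,
      fun ψ hconv hzero hdiff hΔ E _ x y => ?_⟩
    have hle {a b : ℝ} := shiftNF_le_mul_shiftNF (a := a) (b := b) (t := ‖x - y‖)
      hconv hzero hdiff hΔ
    have hxy := abs_norm_sub_norm_le x y
    exact ⟨(inv_mul_le_iff₀ hC).2
        (hle (norm_nonneg y) (norm_nonneg x) (by rwa [abs_sub_comm])),
      hle (norm_nonneg x) (norm_nonneg y) hxy⟩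
  · exact ⟨1, one_pos, 1, one_pos, fun ψ _ _ _ hΔ => absurd hΔ.1 hK⟩

open scoped Matrix.Norms.Frobenius

theorem frobNorm_eq_norm {d n : ℕ} (P : Fin d → Fin n → ℝ) :
    frobNorm P = ‖Matrix.of P‖ := by
  simp [frobNorm, Matrix.frobenius_norm_def, Real.sqrt_eq_rpow]

/-- `ψ_{|Q|}(|P−Q|) ∼ ψ_{|P|}(|P−Q|)` uniformly in `P, Q`, with constants
depending only on the Δ₂-constants of `ψ` and `ψ*`. -/
theorem shift_equiv (K₁ K₂ : ℝ) :
    ∃ c > (0:ℝ), ∃ C > (0:ℝ), ∀ ψ : ℝ → ℝ, IsRegularNFunction ψ →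
      SatisfiesDelta2 ψ K₁ → SatisfiesDelta2 (conjNF ψ) K₂ →
      ∀ d n : ℕ, 1 ≤ d → 1 ≤ n → ∀ P Q : Fin d → Fin n → ℝ,
        c * shiftNF ψ (frobNorm P) (frobNorm (P - Q)) ≤
            shiftNF ψ (frobNorm Q) (frobNorm (P - Q)) ∧
          shiftNF ψ (frobNorm Q) (frobNorm (P - Q)) ≤
            C * shiftNF ψ (frobNorm P) (frobNorm (P - Q)) := by
  obtain ⟨c, hc, C, hC, h⟩ := shift_equiv_general K₁
  refine ⟨c, hc, C, hC, fun ψ hψ hΔ _ d n _ _ P Q => ?_⟩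
  simpa only [frobNorm_eq_norm, Matrix.of_sub_of] using
    h ψ hψ.1.1 hψ.1.2.1 (fun t ht =>
      (hψ.2.2.1.differentiableOn two_ne_zero).differentiableAt (Ioi_mem_nhds ht))
      hΔ _ (Matrix.of P) (Matrix.of Q)

end
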